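/- arXiv:1810.02839 — 2 statements merged into one kernel-verified Lean document; each statement's English description precedes it below -/
import Mathlib

section
/- Let S be a finite set of points in the plane in general position and let T₁ = (S,E₁), T₂ = (S,E₂) ∈ 𝒯(S) be related by a simultaneous edge slide with bijection π : E₁ ∖ E₂ → E₂ ∖ E₁ such that for every e ∈ E₁ ∖ E₂ the edges e and π(e) are adjacent and the third edge of the triangle formed by e and π(e) lies in E₁ ∩ E₂. Then for every subset Ê ⊆ E₁ ∖ E₂, the graph (S, (E₁ ∖ Ê) ∪ π(Ê)) is a noncrossing straight-line spanning tree in 𝒯(S); consequently, a sequence of single edge slides can successively replace every edge e ∈ E₁ ∖ E₂ with π(e), transforming T₁ into T₂. -/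
open scoped Classical

noncomputable section

/-- Points in the plane. -/
abbrev Pt : Type := ℝ × ℝ

/-- The closed straight-line segment spanned by an (unordered) edge. -/
def segOf (e : Sym2 Pt) : Set Pt :=
  Sym2.lift ⟨fun p q => segment ℝ p q, fun p q => segment_symm ℝ p q⟩ e

/-- The set of endpoints of an edge. -/
def epts (e : Sym2 Pt) : Set Pt := {p | p ∈ e}

/-- Two edges intersect in at most common endpoints (they do not cross). -/
def NoCrossPair (e f : Sym2 Pt) : Prop := segOf e ∩ segOf f ⊆ epts e ∩ epts f

/-- A set of edges is noncrossing: any two distinct edges meet in at most a common endpoint. -/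
def NoCross (E : Finset (Sym2 Pt)) : Prop := ∀ e ∈ E, ∀ f ∈ E, e ≠ f → NoCrossPair e f

/-- `E` is the edge set of a noncrossing straight-line spanning tree on the point set `S`:
all edges are nondegenerate with endpoints in `S`, pairwise noncrossing, there are
`|S| - 1` of them, and they connect all of `S`. -/
def IsPST (S : Finset Pt) (E : Finset (Sym2 Pt)) : Prop :=
  (∀ e ∈ E, ¬ e.IsDiag ∧ ∀ p ∈ e, p ∈ S) ∧
  NoCross E ∧ E.card + 1 = S.card ∧
  ∀ p ∈ S, ∀ q ∈ S, Relation.ReflTransGen (fun a b => s(a, b) ∈ E) p q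

/-- `S` is in general position: no three of its points are collinear. -/
def GenPos (S : Finset Pt) : Prop :=
  ∀ p ∈ S, ∀ q ∈ S, ∀ r ∈ S, p ≠ q → p ≠ r → q ≠ r → ¬ Collinear ℝ ({p, q, r} : Set Pt)

/-- `S` is in convex position: every point of `S` is a vertex of the convex hull of `S`. -/
def ConvexPos (S : Finset Pt) : Prop :=
  ∀ p ∈ S, p ∉ convexHull ℝ ((S : Set Pt) \ {p})

/-- The open interior of the triangle with vertices `p`, `q`, `r`. -/
def triInt (p q r : Pt) : Set Pt := interior (convexHull ℝ ({p, q, r} : Set Pt))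

/-- `y` can be reached from `x` by a sequence of at most `m` `step`-operations. -/
def ReachesIn {α : Type*} (step : α → α → Prop) (m : ℕ) (x y : α) : Prop :=
  ∃ k ≤ m, ∃ f : ℕ → α, f 0 = x ∧ f k = y ∧ ∀ i < k, step (f i) (f (i + 1))

/-- A simultaneous rotation from `E₁` to `E₂`: a bijection `π` between the removed and the
inserted edges such that each `e` shares an endpoint with `π e` and `π e` crosses no edge
of `E₁`. -/
def SimRotation (S : Finset Pt) (E₁ E₂ : Finset (Sym2 Pt)) : Prop :=
  IsPST S E₁ ∧ IsPST S E₂ ∧ ∃ π : Sym2 Pt → Sym2 Pt,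
    Set.BijOn π ↑(E₁ \ E₂) ↑(E₂ \ E₁) ∧
    ∀ e ∈ E₁ \ E₂, (∃ p, p ∈ e ∧ p ∈ π e) ∧ ∀ f ∈ E₁, NoCrossPair (π e) f

/-- An empty-triangle rotation replaces an edge `pq` by an adjacent edge `pr` such that
no edge of either tree meets the interior of the triangle `pqr`. -/
def EmptyTriRot (S : Finset Pt) (E₁ E₂ : Finset (Sym2 Pt)) : Prop :=
  IsPST S E₁ ∧ IsPST S E₂ ∧ ∃ p q r : Pt,
    E₁ \ E₂ = {s(p, q)} ∧ E₂ \ E₁ = {s(p, r)} ∧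
    ∀ g ∈ E₁ ∪ E₂, Disjoint (segOf g) (triInt p q r)

/-- A simultaneous empty-triangle rotation. -/
def SimEmptyTriRot (S : Finset Pt) (E₁ E₂ : Finset (Sym2 Pt)) : Prop :=
  IsPST S E₁ ∧ IsPST S E₂ ∧ ∃ π : Sym2 Pt → Sym2 Pt,
    Set.BijOn π ↑(E₁ \ E₂) ↑(E₂ \ E₁) ∧
    ∀ e ∈ E₁ \ E₂, ∃ p q r : Pt, e = s(p, q) ∧ π e = s(p, r) ∧
      ∀ g ∈ E₁ ∪ E₂, Disjoint (segOf g) (triInt p q r)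

/-- An edge slide replaces `pq` by `pr`, where `qr` is an edge of both trees and no edge of
either tree meets the interior of the triangle `pqr`. -/
def EdgeSlide (S : Finset Pt) (E₁ E₂ : Finset (Sym2 Pt)) : Prop :=
  IsPST S E₁ ∧ IsPST S E₂ ∧ ∃ p q r : Pt,
    E₁ \ E₂ = {s(p, q)} ∧ E₂ \ E₁ = {s(p, r)} ∧
    s(q, r) ∈ E₁ ∧ s(q, r) ∈ E₂ ∧
    ∀ g ∈ E₁ ∪ E₂, Disjoint (segOf g) (triInt p q r)

/-- A simultaneous edge slide. -/
def SimEdgeSlide (S : Finset Pt) (E₁ E₂ : Finset (Sym2 Pt)) : Prop :=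
  IsPST S E₁ ∧ IsPST S E₂ ∧ ∃ π : Sym2 Pt → Sym2 Pt,
    Set.BijOn π ↑(E₁ \ E₂) ↑(E₂ \ E₁) ∧
    ∀ e ∈ E₁ \ E₂, ∃ p q r : Pt, e = s(p, q) ∧ π e = s(p, r) ∧
      s(q, r) ∈ E₁ ∧ s(q, r) ∈ E₂ ∧
      ∀ g ∈ E₁ ∪ E₂, Disjoint (segOf g) (triInt p q r)

/-- `e` is an edge of the convex hull of `S`: it joins two distinct points of `S` and its
segment lies on the boundary of the convex hull of `S`. -/
def IsHullEdge (S : Finset Pt) (e : Sym2 Pt) : Prop :=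
  ∃ u v : Pt, e = s(u, v) ∧ u ∈ S ∧ v ∈ S ∧ u ≠ v ∧
    segment ℝ u v ⊆ frontier (convexHull ℝ (S : Set Pt))

/-- The spanning star centered at `v`. -/
def starAt (S : Finset Pt) (v : Pt) : Finset (Sym2 Pt) := (S.erase v).image (fun w => s(v, w))

/-- An edge-labeled tree: an edge set together with a labeling function. -/
abbrev LTree := Finset (Sym2 Pt) × (Sym2 Pt → ℕ)

/-- `T` is an edge-labeled noncrossing straight-line spanning tree on `S`: its edge set is in
`𝒯(S)` and its labeling is a bijection from the edges onto `{1, …, |S| - 1}`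
(normalized to `0` on non-edges). -/
def IsLabeledPST (S : Finset Pt) (T : LTree) : Prop :=
  IsPST S T.1 ∧ Set.BijOn T.2 ↑T.1 (Set.Icc 1 (S.card - 1)) ∧ ∀ e, e ∉ T.1 → T.2 e = 0

/-- A simultaneous exchange on edge-labeled trees: an arbitrary bijection between removed and
inserted edges transferring labels, all common edges keeping their labels. -/
def LabSimExchange (S : Finset Pt) (T₁ T₂ : LTree) : Prop :=
  IsLabeledPST S T₁ ∧ IsLabeledPST S T₂ ∧ ∃ π : Sym2 Pt → Sym2 Pt,
    Set.BijOn π ↑(T₁.1 \ T₂.1) ↑(T₂.1 \ T₁.1) ∧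
    (∀ e ∈ T₁.1 \ T₂.1, T₂.2 (π e) = T₁.2 e) ∧
    ∀ e ∈ T₁.1 ∩ T₂.1, T₂.2 e = T₁.2 e

/-- A rotation on edge-labeled trees: the removed and inserted edges share an endpoint and do
not cross, the label of the removed edge is transferred, and all other labels are kept. -/
def LabRotation (S : Finset Pt) (T₁ T₂ : LTree) : Prop :=
  IsLabeledPST S T₁ ∧ IsLabeledPST S T₂ ∧ ∃ e₁ e₂ : Sym2 Pt,
    T₁.1 \ T₂.1 = {e₁} ∧ T₂.1 \ T₁.1 = {e₂} ∧
    (∃ p, p ∈ e₁ ∧ p ∈ e₂) ∧ NoCrossPair e₁ e₂ ∧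
    T₂.2 e₂ = T₁.2 e₁ ∧ ∀ e ∈ T₁.1 ∩ T₂.1, T₂.2 e = T₁.2 e

/-- An edge slide on edge-labeled trees, transferring the label of the slid edge. -/
def LabEdgeSlide (S : Finset Pt) (T₁ T₂ : LTree) : Prop :=
  IsLabeledPST S T₁ ∧ IsLabeledPST S T₂ ∧ ∃ p q r : Pt,
    T₁.1 \ T₂.1 = {s(p, q)} ∧ T₂.1 \ T₁.1 = {s(p, r)} ∧
    s(q, r) ∈ T₁.1 ∧ s(q, r) ∈ T₂.1 ∧
    (∀ g ∈ T₁.1 ∪ T₂.1, Disjoint (segOf g) (triInt p q r)) ∧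
    T₂.2 (s(p, r)) = T₁.2 (s(p, q)) ∧ ∀ e ∈ T₁.1 ∩ T₂.1, T₂.2 e = T₁.2 e

/-!
In an intermediate tree, the only pairs of edges that lie in neither `E₁` nor `E₂` consist of an
edge `ab` of `E₁` and a slid edge `pr = π(pq)`. A tree vertex never lies in the relative interior
of a tree edge, so `ab` and `pr` can only cross in their relative interiors. If `ab` left the line
`pr` there, it would enter the triangle `pqr` (on one side of `pr`), which is empty; and if it
stayed on the line, an endpoint of one edge would lie inside the other. The triangle `pqr` is
nondegenerate, since otherwise one of its vertices would lie inside the opposite side, a tree edge.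
Connectivity survives because a removed edge `pq` is bypassed by the path `p, r, q`.
-/

lemma mem_affineSpan_image_compl_of_coord_eq_zero {ι k V P : Type*} [Finite ι]
    [Ring k] [Nontrivial k] [AddCommGroup V] [Module k V] [AddTorsor V P] (b : AffineBasis ι k P)
    {i : ι} {a : P} (ha : b.coord i a = 0) : a ∈ affineSpan k (b '' {i}ᶜ) := by
  cases nonempty_fintype ι
  rw [← b.affineCombination_coord_eq_self a]
  refine affineCombination_mem_affineSpan_image (b.sum_coord_apply_eq_one a) ?_ b
  rintro j - hj
  rwa [show j = i by simpa using hj]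

section Simplex

variable {ι E : Type*} [Finite ι] [NormedAddCommGroup E] [NormedSpace ℝ E]
  (b : AffineBasis ι ℝ E) {i : ι} {a c x : E}

lemma exists_mem_segment_mem_interior_convexHull (hxi : 0 ≤ b.coord i x)
    (hx : ∀ j ≠ i, 0 < b.coord j x) (ha : 0 < b.coord i a) :
    ∃ y ∈ segment ℝ x a, y ∈ interior (convexHull ℝ (Set.range b)) := by
  have coord_pos : ∀ j, ∀ᶠ t : ℝ in nhdsWithin 0 (Set.Ioi 0),
      0 < b.coord j (AffineMap.lineMap x a t) := by
    intro j
    simp only [AffineMap.apply_lineMap]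
    rcases eq_or_ne j i with rfl | hj
    · filter_upwards [Ioo_mem_nhdsGT one_pos] with t ht
      rw [AffineMap.lineMap_apply_ring]
      nlinarith [ht.1, ht.2]
    · have hcont : Continuous (AffineMap.lineMap (b.coord j x) (b.coord j a) : ℝ → ℝ) :=
        AffineMap.lineMap_continuous
      exact nhdsWithin_le_nhds (hcont.tendsto 0 (lt_mem_nhds (by simpa using hx j hj)))
  obtain ⟨t, htpos, ht⟩ :=
    ((Filter.eventually_all.2 coord_pos).and (Ioo_mem_nhdsGT one_pos)).exists
  refine ⟨AffineMap.lineMap x a t, ?_, by rwa [b.interior_convexHull]⟩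
  rw [segment_eq_image_lineMap]
  exact Set.mem_image_of_mem _ ⟨ht.1.le, ht.2.le⟩

lemma coord_nonpos_of_disjoint_interior_convexHull (hxi : 0 ≤ b.coord i x)
    (hx : ∀ j ≠ i, 0 < b.coord j x)
    (hd : Disjoint (segment ℝ x a) (interior (convexHull ℝ (Set.range b)))) :
    b.coord i a ≤ 0 := by
  by_contra! ha
  obtain ⟨y, hy, hyint⟩ := exists_mem_segment_mem_interior_convexHull b hxi hx ha
  exact Set.disjoint_left.1 hd hy hyint

lemma coord_eq_zero_of_mem_openSegment (hxi : b.coord i x = 0) (hx : ∀ j ≠ i, 0 < b.coord j x)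
    (hxac : x ∈ openSegment ℝ a c)
    (hd : Disjoint (segment ℝ a c) (interior (convexHull ℝ (Set.range b)))) :
    b.coord i a = 0 := by
  have hxac' := openSegment_subset_segment ℝ a c hxac
  have ha := coord_nonpos_of_disjoint_interior_convexHull b hxi.ge hx
    (hd.mono_left ((convex_segment a c).segment_subset hxac' (left_mem_segment ℝ a c)))
  have hc := coord_nonpos_of_disjoint_interior_convexHull b hxi.ge hx
    (hd.mono_left ((convex_segment a c).segment_subset hxac' (right_mem_segment ℝ a c)))
  rw [openSegment_eq_image_lineMap] at hxac
  obtain ⟨t, ht, rfl⟩ := hxac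
  rw [AffineMap.apply_lineMap, AffineMap.lineMap_apply_ring] at hxi
  nlinarith [ht.1, ht.2]

end Simplex

section Segments

variable {𝕜 E : Type*} [Field 𝕜] [LinearOrder 𝕜] [IsStrictOrderedRing 𝕜] [AddCommGroup E]
  [Module 𝕜 E]

lemma sym2_eq_of_mem_openSegment {a b c d x : 𝕜} (hxab : x ∈ openSegment 𝕜 a b)
    (hxcd : x ∈ openSegment 𝕜 c d) (hab : ∀ v ∈ s(a, b), v ∈ segment 𝕜 c d → v ∈ s(c, d))
    (hcd : ∀ v ∈ s(c, d), v ∈ segment 𝕜 a b → v ∈ s(a, b)) : s(a, b) = s(c, d) := by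
  have strictly_between : ∀ u v : 𝕜, x ∈ openSegment 𝕜 u v →
      u < x ∧ x < v ∨ v < x ∧ x < u ∨ x = u ∧ x = v := by
    intro u v hx
    rcases lt_trichotomy u v with huv | rfl | hvu
    · exact .inl (by rwa [openSegment_eq_Ioo huv] at hx)
    · exact .inr (.inr (by simpa using hx))
    · rw [openSegment_symm, openSegment_eq_Ioo hvu] at hx
      exact .inr (.inl hx)
  have hxab := strictly_between a b hxab
  have hxcd := strictly_between c d hxcd
  simp only [segment_eq_uIcc, Set.mem_uIcc, Sym2.mem_iff, forall_eq_or_imp, forall_eq] at hab hcd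
  rw [Sym2.eq_iff]
  grind

lemma sym2_eq_of_mem_openSegment_of_mem_line {a b c d x : E} (hne : c ≠ d)
    (ha : a ∈ line[𝕜, c, d]) (hb : b ∈ line[𝕜, c, d]) (hxab : x ∈ openSegment 𝕜 a b)
    (hxcd : x ∈ openSegment 𝕜 c d) (hab : ∀ v ∈ s(a, b), v ∈ segment 𝕜 c d → v ∈ s(c, d))
    (hcd : ∀ v ∈ s(c, d), v ∈ segment 𝕜 a b → v ∈ s(a, b)) : s(a, b) = s(c, d) := by
  let f : 𝕜 →ᵃ[𝕜] E := AffineMap.lineMap c d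
  have hf : Function.Injective f := AffineMap.lineMap_injective 𝕜 hne
  obtain ⟨α, rfl : f α = a⟩ := mem_affineSpan_pair_iff_exists_lineMap_eq.1 ha
  obtain ⟨β, rfl : f β = b⟩ := mem_affineSpan_pair_iff_exists_lineMap_eq.1 hb
  have hc : c = f 0 := (AffineMap.lineMap_apply_zero c d).symm
  have hd : d = f 1 := (AffineMap.lineMap_apply_one c d).symm
  have mem_segment (u v w : 𝕜) : f w ∈ segment 𝕜 (f u) (f v) ↔ w ∈ segment 𝕜 u v := by
    rw [← image_segment, hf.mem_set_image]
  have mem_sym2 (u v w : 𝕜) : f w ∈ s(f u, f v) ↔ w ∈ s(u, v) := by simp [hf.eq_iff]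
  rw [hc, hd] at hxcd hab hcd ⊢
  rw [← image_openSegment] at hxcd
  obtain ⟨ξ, hξcd, rfl⟩ := hxcd
  rw [← image_openSegment, hf.mem_set_image] at hxab
  have hends : s(α, β) = s(0, 1) := sym2_eq_of_mem_openSegment hxab hξcd
    (fun v hv hvs ↦ (mem_sym2 ..).1 (hab (f v) ((mem_sym2 ..).2 hv) ((mem_segment ..).2 hvs)))
    (fun v hv hvs ↦ (mem_sym2 ..).1 (hcd (f v) ((mem_sym2 ..).2 hv) ((mem_segment ..).2 hvs)))
  exact congrArg (Sym2.map f) hends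

end Segments

lemma mem_line_of_disjoint_triInt {p q r a b x : Pt} (hpqr : ¬ Collinear ℝ {p, q, r})
    (hxpr : x ∈ openSegment ℝ p r) (hxab : x ∈ openSegment ℝ a b)
    (hd : Disjoint (segment ℝ a b) (triInt p q r)) : a ∈ line[ℝ, p, r] := by
  have hind : AffineIndependent ℝ ![p, q, r] := affineIndependent_iff_not_collinear_set.2 hpqr
  let B : AffineBasis (Fin 3) ℝ Pt :=
    ⟨![p, q, r], hind, hind.affineSpan_eq_top_iff_card_eq_finrank_add_one.2 (by simp)⟩
  have hB : ⇑B = ![p, q, r] := rfl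
  have hrange : Set.range B = {p, q, r} := by
    simp only [hB, Matrix.range_cons, Matrix.range_empty, Set.union_empty, Set.singleton_union]
  have hface : B '' {1}ᶜ = {p, r} := by
    ext z
    simp [hB, Fin.exists_fin_succ, eq_comm]
  rw [openSegment_eq_image_lineMap] at hxpr
  obtain ⟨t, ht, rfl⟩ := hxpr
  have hcoord (j) : B.coord j (AffineMap.lineMap p r t) =
      AffineMap.lineMap (B.coord j (B 0)) (B.coord j (B 2)) t := AffineMap.apply_lineMap ..
  rw [← hface]
  refine mem_affineSpan_image_compl_of_coord_eq_zero B
    (coord_eq_zero_of_mem_openSegment B ?_ ?_ hxab (by rwa [hrange]))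
  · simp [hcoord, B.coord_apply]
  · intro j hj
    fin_cases j
    · simpa [hcoord, B.coord_apply, AffineMap.lineMap_apply_ring] using ht.2
    · exact absurd rfl hj
    · simpa [hcoord, B.coord_apply, AffineMap.lineMap_apply_ring] using ht.1

lemma noCrossPair_of_disjoint_triInt {e : Sym2 Pt} {p q r : Pt}
    (hpqr : ¬ Collinear ℝ {p, q, r}) (hne : e ≠ s(p, r))
    (he : ∀ v ∈ e, v ∈ segOf s(p, r) → v ∈ s(p, r)) (hpr : ∀ v ∈ s(p, r), v ∈ segOf e → v ∈ e)
    (hd : Disjoint (segOf e) (triInt p q r)) : NoCrossPair e s(p, r) := by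
  rintro x ⟨hxe, hxpr⟩
  suffices x ∈ e ∨ x ∈ s(p, r) from
    this.elim (fun hx ↦ ⟨hx, he x hx hxpr⟩) (fun hx ↦ ⟨hpr x hx hxe, hx⟩)
  by_contra! hx
  induction e using Sym2.ind with | _ a b
  simp only [Sym2.mem_iff, not_or, ← ne_eq] at hx
  obtain ⟨⟨hxa, hxb⟩, hxp, hxr⟩ := hx
  have hxab : x ∈ openSegment ℝ a b := mem_openSegment_of_ne_left_right hxa.symm hxb.symm hxe
  have hxpr : x ∈ openSegment ℝ p r := mem_openSegment_of_ne_left_right hxp.symm hxr.symm hxpr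
  have ha : a ∈ line[ℝ, p, r] := mem_line_of_disjoint_triInt hpqr hxpr hxab hd
  have hb : b ∈ line[ℝ, p, r] := mem_line_of_disjoint_triInt hpqr hxpr
    (openSegment_symm ℝ a b ▸ hxab) (segment_symm ℝ a b ▸ hd)
  exact hne (sym2_eq_of_mem_openSegment_of_mem_line (ne₁₃_of_not_collinear hpqr) ha hb hxab hxpr
    he hpr)

lemma NoCrossPair.symm {e f : Sym2 Pt} (h : NoCrossPair e f) : NoCrossPair f e :=
  fun _ hx ↦ (h hx.symm).symm

lemma IsPST.exists_mem_edge {S : Finset Pt} {E : Finset (Sym2 Pt)} (h : IsPST S E)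
    {v w : Pt} (hv : v ∈ S) (hw : w ∈ S) (hvw : v ≠ w) : ∃ e ∈ E, v ∈ e := by
  obtain rfl | ⟨u, hvu, -⟩ := (h.2.2.2 v hv w hw).cases_head
  · exact absurd rfl hvw
  · exact ⟨s(v, u), hvu, Sym2.mem_mk_left v u⟩

lemma mem_segOf_of_mem {e : Sym2 Pt} {v : Pt} (hv : v ∈ e) : v ∈ segOf e := by
  induction e using Sym2.ind with | _ a b
  obtain rfl | rfl := Sym2.mem_iff.1 hv
  exacts [left_mem_segment ℝ v b, right_mem_segment ℝ a v]

lemma IsPST.mem_of_mem_segOf {S : Finset Pt} {E : Finset (Sym2 Pt)} (h : IsPST S E)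
    {e : Sym2 Pt} (he : e ∈ E) {v : Pt} (hv : v ∈ S) (hve : v ∈ segOf e) : v ∈ e := by
  by_contra hvne
  obtain ⟨w, hw⟩ : ∃ w, w ∈ e := ⟨_, e.out_fst_mem⟩
  obtain ⟨f, hf, hvf⟩ := h.exists_mem_edge hv ((h.1 e he).2 w hw) (by rintro rfl; exact hvne hw)
  have hef : e ≠ f := by rintro rfl; exact hvne hvf
  exact hvne (h.2.1 e he f hf hef ⟨hve, mem_segOf_of_mem hvf⟩).1

lemma not_collinear_of_isPST {S : Finset Pt} {E₁ E₂ : Finset (Sym2 Pt)} (h₁ : IsPST S E₁)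
    (h₂ : IsPST S E₂) {p q r : Pt} (hpq : s(p, q) ∈ E₁) (hqr : s(q, r) ∈ E₁)
    (hpr : s(p, r) ∈ E₂) : ¬ Collinear ℝ {p, q, r} := by
  have hpq_ne : p ≠ q := by simpa using (h₁.1 _ hpq).1
  have hqr_ne : q ≠ r := by simpa using (h₁.1 _ hqr).1
  have hpr_ne : p ≠ r := by simpa using (h₂.1 _ hpr).1
  have hp : p ∈ S := (h₁.1 _ hpq).2 p (Sym2.mem_mk_left p q)
  have hq : q ∈ S := (h₁.1 _ hpq).2 q (Sym2.mem_mk_right p q)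
  have hr : r ∈ S := (h₁.1 _ hqr).2 r (Sym2.mem_mk_right q r)
  intro hcol
  rcases hcol.wbtw_or_wbtw_or_wbtw with hbtw | hbtw | hbtw
  · have hq_end := Sym2.mem_iff.1 (h₂.mem_of_mem_segOf hpr hq hbtw.mem_segment)
    grind
  · have hr_end := Sym2.mem_iff.1 (h₁.mem_of_mem_segOf hpq hr hbtw.symm.mem_segment)
    grind
  · have hp_end := Sym2.mem_iff.1 (h₁.mem_of_mem_segOf hqr hp hbtw.symm.mem_segment)
    grind

section Exchange

/-- The edge set `(E ∖ F) ∪ π(F)` obtained from `E` by replacing each `e ∈ F` with `π e`. -/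
def exchange {α : Type*} [DecidableEq α] (π : α → α) (E F : Finset α) : Finset α :=
  (E \ F) ∪ F.image π

variable {α : Type*} [DecidableEq α] {π : α → α} {E F : Finset α} {e : α}

lemma mem_exchange : e ∈ exchange π E F ↔ e ∈ E ∧ e ∉ F ∨ ∃ g ∈ F, π g = e := by
  simp [exchange]

lemma exchange_empty : exchange π E ∅ = E := by simp [exchange]

lemma exchange_sdiff_of_bijOn {E' : Finset α} (hπ : Set.BijOn π ↑(E \ E') ↑(E' \ E)) :
    exchange π E (E \ E') = E' := by
  have himage : (E \ E').image π = E' \ E :=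
    Finset.coe_injective (by rw [Finset.coe_image, hπ.image_eq])
  rw [exchange, himage, sdiff_sdiff_right_self, Finset.inf_eq_inter, Finset.inter_comm,
    Finset.union_comm, Finset.sdiff_union_inter]

lemma card_exchange (hF : F ⊆ E) (hmaps : ∀ g ∈ F, π g ∉ E) (hinj : Set.InjOn π F) :
    (exchange π E F).card = E.card := by
  have hdisj : Disjoint (E \ F) (F.image π) := by
    simp only [Finset.disjoint_right, Finset.mem_image]
    rintro _ ⟨g, hg, rfl⟩ hπg
    exact hmaps g hg (Finset.mem_sdiff.1 hπg).1
  rw [exchange, Finset.card_union_of_disjoint hdisj, Finset.card_image_of_injOn hinj,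
    Finset.card_sdiff_add_card_eq_card hF]

lemma exchange_sdiff_exchange_insert (he : e ∈ E) (heF : e ∉ F)
    (hmaps : ∀ g ∈ insert e F, π g ∉ E) :
    exchange π E F \ exchange π E (insert e F) = {e} := by
  ext f
  simp only [Finset.mem_sdiff, mem_exchange, Finset.mem_insert, Finset.mem_singleton]
  grind

lemma exchange_insert_sdiff_exchange (heF : e ∉ F) (hπe : π e ∉ E)
    (hinj : Set.InjOn π (insert e F : Finset α)) :
    exchange π E (insert e F) \ exchange π E F = {π e} := by
  have hπ_ne : ∀ g ∈ F, π g ≠ π e := fun g hg hge ↦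
    heF (hinj (by simp [hg]) (by simp) hge ▸ hg)
  ext f
  simp only [Finset.mem_sdiff, mem_exchange, Finset.mem_insert, Finset.mem_singleton]
  grind

lemma reflTransGen_exchange {V : Type*} [DecidableEq V] {E F : Finset (Sym2 V)}
    {π : Sym2 V → Sym2 V}
    (hdetour : ∀ e ∈ F, ∃ p q r, e = s(p, q) ∧ π e = s(p, r) ∧ s(q, r) ∈ E \ F) {a b : V}
    (hab : Relation.ReflTransGen (fun a b ↦ s(a, b) ∈ E) a b) :
    Relation.ReflTransGen (fun a b ↦ s(a, b) ∈ exchange π E F) a b := by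
  refine Relation.reflTransGen_closed (fun a b hab ↦ ?_) a b hab
  by_cases habF : s(a, b) ∈ F
  · obtain ⟨p, q, r, hpq, hpr, hqr⟩ := hdetour _ habF
    have hpr' : s(p, r) ∈ exchange π E F := mem_exchange.2 (.inr ⟨_, habF, hpr⟩)
    have hqr' : s(q, r) ∈ exchange π E F := mem_exchange.2 (.inl (Finset.mem_sdiff.1 hqr))
    obtain ⟨rfl, rfl⟩ | ⟨rfl, rfl⟩ := Sym2.eq_iff.1 hpq
    · exact .tail (.single hpr') (Sym2.eq_swap ▸ hqr')
    · exact .tail (.single hqr') (Sym2.eq_swap ▸ hpr')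
  · exact .single (mem_exchange.2 (.inl ⟨hab, habF⟩))

end Exchange

section Reachability

variable {α β : Type*} {step : β → β → Prop}

lemma ReachesIn.snoc {m : ℕ} {x y z : β} (h : ReachesIn step m x y) (hyz : step y z) :
    ReachesIn step (m + 1) x z := by
  obtain ⟨k, hk, f, hf0, hfk, hf⟩ := h
  refine ⟨k + 1, by omega, fun i ↦ if i ≤ k then f i else z, by simp [hf0], by simp, ?_⟩
  intro i hi
  rcases (Nat.lt_succ_iff.1 hi).lt_or_eq with hik | rfl
  · simpa [hik.le, Nat.succ_le_of_lt hik] using hf i hik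
  · simpa [hfk] using hyz

lemma reachesIn_card_of_step_insert [DecidableEq α] {x : Finset α → β} {D : Finset α}
    (hstep : ∀ F a, a ∉ F → insert a F ⊆ D → step (x F) (x (insert a F))) :
    ReachesIn step D.card (x ∅) (x D) := by
  suffices ∀ F ⊆ D, ReachesIn step F.card (x ∅) (x F) from this D subset_rfl
  intro F
  induction F using Finset.induction_on with
  | empty => exact fun _ ↦ ⟨0, le_rfl, fun _ ↦ x ∅, rfl, rfl, by simp⟩
  | insert a F ha ih =>
    intro hF
    rw [Finset.card_insert_of_notMem ha]
    exact (ih ((Finset.subset_insert a F).trans hF)).snoc (hstep F a ha hF)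

end Reachability

/-- `π` realizes a simultaneous edge slide from `E₁` to `E₂`: it is the bijection whose existence
`SimEdgeSlide S E₁ E₂` asserts. -/
structure IsSimSlideMap (S : Finset Pt) (E₁ E₂ : Finset (Sym2 Pt)) (π : Sym2 Pt → Sym2 Pt) :
    Prop where
  source : IsPST S E₁
  target : IsPST S E₂
  bijOn : Set.BijOn π ↑(E₁ \ E₂) ↑(E₂ \ E₁)
  slide : ∀ e ∈ E₁ \ E₂, ∃ p q r : Pt, e = s(p, q) ∧ π e = s(p, r) ∧
    s(q, r) ∈ E₁ ∧ s(q, r) ∈ E₂ ∧ ∀ g ∈ E₁ ∪ E₂, Disjoint (segOf g) (triInt p q r)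

namespace IsSimSlideMap

variable {S : Finset Pt} {E₁ E₂ F : Finset (Sym2 Pt)} {π : Sym2 Pt → Sym2 Pt} {e g : Sym2 Pt}

lemma map_mem_target (h : IsSimSlideMap S E₁ E₂ π) (hg : g ∈ E₁ \ E₂) : π g ∈ E₂ :=
  (Finset.mem_sdiff.1 (h.bijOn.mapsTo hg)).1

lemma map_notMem_source (h : IsSimSlideMap S E₁ E₂ π) (hg : g ∈ E₁ \ E₂) : π g ∉ E₁ :=
  (Finset.mem_sdiff.1 (h.bijOn.mapsTo hg)).2

lemma exchange_subset (h : IsSimSlideMap S E₁ E₂ π) (hF : F ⊆ E₁ \ E₂) :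
    exchange π E₁ F ⊆ E₁ ∪ E₂ := by
  intro e he
  obtain ⟨he, -⟩ | ⟨g, hg, rfl⟩ := mem_exchange.1 he
  · exact Finset.mem_union_left _ he
  · exact Finset.mem_union_right _ (h.map_mem_target (hF hg))

lemma noCrossPair_map (h : IsSimSlideMap S E₁ E₂ π) (he : e ∈ E₁) (hg : g ∈ E₁ \ E₂) :
    NoCrossPair e (π g) := by
  obtain ⟨p, q, r, hgpq, hπg, hqr, -, hd⟩ := h.slide g hg
  have hpq : s(p, q) ∈ E₁ := hgpq ▸ (Finset.mem_sdiff.1 hg).1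
  have hpr : s(p, r) ∈ E₂ := hπg ▸ h.map_mem_target hg
  have hne : e ≠ s(p, r) := fun heq ↦ h.map_notMem_source hg (hπg ▸ heq ▸ he)
  rw [hπg]
  exact noCrossPair_of_disjoint_triInt (not_collinear_of_isPST h.source h.target hpq hqr hpr) hne
    (fun v hv ↦ h.target.mem_of_mem_segOf hpr ((h.source.1 e he).2 v hv))
    (fun v hv ↦ h.source.mem_of_mem_segOf he ((h.target.1 _ hpr).2 v hv))
    (hd e (Finset.mem_union_left _ he))

lemma noCross_exchange (h : IsSimSlideMap S E₁ E₂ π) (hF : F ⊆ E₁ \ E₂) :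
    NoCross (exchange π E₁ F) := by
  intro e he f hf hef
  rw [mem_exchange] at he hf
  obtain ⟨he, -⟩ | ⟨e, he, rfl⟩ := he <;> obtain ⟨hf, -⟩ | ⟨f, hf, rfl⟩ := hf
  · exact h.source.2.1 e he f hf hef
  · exact h.noCrossPair_map he (hF hf)
  · exact (h.noCrossPair_map hf (hF he)).symm
  · exact h.target.2.1 _ (h.map_mem_target (hF he)) _ (h.map_mem_target (hF hf)) hef

lemma isPST_exchange (h : IsSimSlideMap S E₁ E₂ π) (hF : F ⊆ E₁ \ E₂) :
    IsPST S (exchange π E₁ F) := by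
  refine ⟨fun e he ↦ ?_, h.noCross_exchange hF, ?_, fun p hp q hq ↦ ?_⟩
  · exact (Finset.mem_union.1 (h.exchange_subset hF he)).elim (h.source.1 e) (h.target.1 e)
  · rw [card_exchange (hF.trans Finset.sdiff_subset) (fun g hg ↦ h.map_notMem_source (hF hg))
      (h.bijOn.injOn.mono (Finset.coe_subset.2 hF)), h.source.2.2.1]
  · refine reflTransGen_exchange (fun e he ↦ ?_) (h.source.2.2.2 p hp q hq)
    obtain ⟨p, q, r, hpq, hpr, hqr₁, hqr₂, -⟩ := h.slide e (hF he)
    exact ⟨p, q, r, hpq, hpr,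
      Finset.mem_sdiff.2 ⟨hqr₁, fun hqr ↦ (Finset.mem_sdiff.1 (hF hqr)).2 hqr₂⟩⟩

lemma edgeSlide_exchange_insert (h : IsSimSlideMap S E₁ E₂ π) (heF : e ∉ F)
    (hF : insert e F ⊆ E₁ \ E₂) :
    EdgeSlide S (exchange π E₁ F) (exchange π E₁ (insert e F)) := by
  have hF' : F ⊆ E₁ \ E₂ := (Finset.subset_insert e F).trans hF
  have he : e ∈ E₁ \ E₂ := hF (Finset.mem_insert_self e F)
  obtain ⟨p, q, r, hpq, hpr, hqr₁, hqr₂, hd⟩ := h.slide e he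
  have hqr_mem : ∀ G ⊆ E₁ \ E₂, s(q, r) ∈ exchange π E₁ G := fun G hG ↦
    mem_exchange.2 (.inl ⟨hqr₁, fun hqr ↦ (Finset.mem_sdiff.1 (hG hqr)).2 hqr₂⟩)
  refine ⟨h.isPST_exchange hF', h.isPST_exchange hF, p, q, r, ?_, ?_, hqr_mem F hF',
    hqr_mem _ hF, fun g hg ↦ hd g ?_⟩
  · rw [← hpq]
    exact exchange_sdiff_exchange_insert (Finset.mem_sdiff.1 he).1 heF
      fun g hg ↦ h.map_notMem_source (hF hg)
  · rw [← hpr]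
    exact exchange_insert_sdiff_exchange heF (h.map_notMem_source he)
      (h.bijOn.injOn.mono (Finset.coe_subset.2 hF))
  · exact Finset.union_subset (h.exchange_subset hF') (h.exchange_subset hF) hg

lemma reachesIn_edgeSlide (h : IsSimSlideMap S E₁ E₂ π) :
    ReachesIn (EdgeSlide S) (E₁ \ E₂).card E₁ E₂ := by
  have hreach : ReachesIn (EdgeSlide S) (E₁ \ E₂).card (exchange π E₁ ∅)
      (exchange π E₁ (E₁ \ E₂)) :=
    reachesIn_card_of_step_insert fun _ _ ↦ h.edgeSlide_exchange_insert
  rwa [exchange_empty, exchange_sdiff_of_bijOn h.bijOn] at hreach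

end IsSimSlideMap

theorem stmt_9_general {S : Finset Pt} {E₁ E₂ : Finset (Sym2 Pt)} {π : Sym2 Pt → Sym2 Pt}
    (h : IsSimSlideMap S E₁ E₂ π) :
    (∀ Ehat ⊆ E₁ \ E₂, IsPST S ((E₁ \ Ehat) ∪ Ehat.image π)) ∧
      ReachesIn (EdgeSlide S) (E₁ \ E₂).card E₁ E₂ :=
  ⟨fun _ ↦ h.isPST_exchange, h.reachesIn_edgeSlide⟩

/-- if `T₁` and `T₂` are related by a simultaneous edge slide whose pairs are
adjacent with third edge in `E₁ ∩ E₂`, then replacing any subset `Ehat ⊆ E₁ \ E₂` by `π(Ehat)`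
yields a noncrossing spanning tree; consequently single edge slides transform `T₁` to `T₂`. -/
theorem stmt_9 :
    ∀ S : Finset Pt, GenPos S → ∀ E₁ E₂ : Finset (Sym2 Pt), IsPST S E₁ → IsPST S E₂ →
      ∀ π : Sym2 Pt → Sym2 Pt,
        Set.BijOn π ↑(E₁ \ E₂) ↑(E₂ \ E₁) →
        (∀ e ∈ E₁ \ E₂, ∃ p q r : Pt, e = s(p, q) ∧ π e = s(p, r) ∧
          s(q, r) ∈ E₁ ∧ s(q, r) ∈ E₂ ∧
          ∀ g ∈ E₁ ∪ E₂, Disjoint (segOf g) (triInt p q r)) →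
        (∀ Ehat ⊆ E₁ \ E₂, IsPST S ((E₁ \ Ehat) ∪ Ehat.image π)) ∧
        ReachesIn (EdgeSlide S) (E₁ \ E₂).card E₁ E₂ :=
  fun _ _ _ _ h₁ h₂ _ hπ hslide ↦ stmt_9_general ⟨h₁, h₂, hπ, hslide⟩
end
end

section
/- There exists a constant c > 0 such that for every integer n ≥ 3 and every set S of n points in the plane in convex position, there exist two trees T₁, T₂ ∈ 𝒯(S) such that every sequence of simultaneous edge slides transforming T₁ into T₂ has length at least c·log n. -/
open scoped Classical

noncomputable section

/-!
Compare the stars centred at two points `v ≠ w`. The degree of `v` drops from `n - 1` to `1`, so it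
suffices that one simultaneous slide divides this degree by at most `3`. An edge `vp` that loses `v`
slides along an edge `vr` common to both trees, across an empty triangle `pvr`. If two such edges
used the same `vr` from the same side, the one closer in angle to `vr` would enter the triangle of
the other; hence at most two edges leave `v` per edge that stays.
-/

/-- Twice the signed area of the triangle `abc`, positive when `a`, `b`, `c` are in
counterclockwise order; it decides on which side of the line `ab` the point `c` lies. -/
def orient (a b c : Pt) : ℝ := (b.1 - a.1) * (c.2 - a.2) - (b.2 - a.2) * (c.1 - a.1)

lemma orient_swap (a b c : Pt) : orient a c b = -orient a b c := by
  unfold orient; ring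

lemma orient_self_right (a b : Pt) : orient a b b = 0 := by
  unfold orient; ring

lemma orient_combination_right {s t : ℝ} (hst : s + t = 1) (v a b : Pt) :
    orient v a (s • v + t • b) = t * orient v a b := by
  obtain rfl : s = 1 - t := by linarith
  simp only [orient, Prod.fst_add, Prod.snd_add, Prod.smul_fst, Prod.smul_snd, smul_eq_mul]
  ring

lemma orient_combination_middle {s t : ℝ} (hst : s + t = 1) (v b c : Pt) :
    orient v (s • v + t • b) c = t * orient v b c := by
  rw [orient_swap, orient_combination_right hst, orient_swap v b c]
  ring

lemma collinear_of_orient_eq_zero {p q r : Pt} (h : orient p q r = 0) :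
    Collinear ℝ ({p, q, r} : Set Pt) := by
  rcases eq_or_ne p q with rfl | hpq
  · simpa using collinear_pair ℝ p r
  have hnorm : (q.1 - p.1) ^ 2 + (q.2 - p.2) ^ 2 ≠ 0 := fun h0 => hpq <| by
    ext <;> nlinarith [sq_nonneg (q.1 - p.1), sq_nonneg (q.2 - p.2)]
  -- `t` is the coordinate of the orthogonal projection of `r` to the line `pq`.
  set t : ℝ := ((r.1 - p.1) * (q.1 - p.1) + (r.2 - p.2) * (q.2 - p.2)) /
    ((q.1 - p.1) ^ 2 + (q.2 - p.2) ^ 2) with ht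
  rw [eq_div_iff hnorm] at ht
  have hr : r = AffineMap.lineMap p q t := by
    unfold orient at h
    ext
    · apply mul_right_cancel₀ hnorm
      simp only [AffineMap.lineMap_apply, vsub_eq_sub, vadd_eq_add, Prod.fst_add, Prod.smul_fst,
        Prod.fst_sub, smul_eq_mul]
      linear_combination -(q.1 - p.1) * ht - (q.2 - p.2) * h
    · apply mul_right_cancel₀ hnorm
      simp only [AffineMap.lineMap_apply, vsub_eq_sub, vadd_eq_add, Prod.snd_add, Prod.smul_snd,
        Prod.snd_sub, smul_eq_mul]
      linear_combination -(q.2 - p.2) * ht + (q.1 - p.1) * h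
  rw [Set.pair_comm q, Set.insert_comm, hr]
  exact collinear_insert_of_mem_affineSpan_pair (AffineMap.lineMap_mem_affineSpan_pair t p q)

lemma GenPos.orient_ne_zero {S : Finset Pt} (hS : GenPos S) {p q r : Pt} (hp : p ∈ S) (hq : q ∈ S)
    (hr : r ∈ S) (hpq : p ≠ q) (hpr : p ≠ r) (hqr : q ≠ r) : orient p q r ≠ 0 :=
  fun h => hS p hp q hq r hr hpq hpr hqr (collinear_of_orient_eq_zero h)

lemma ConvexPos.not_wbtw {S : Finset Pt} (hS : ConvexPos S) {x y z : Pt} (hx : x ∈ S) (hy : y ∈ S)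
    (hz : z ∈ S) (hxy : x ≠ y) (hyz : y ≠ z) : ¬ Wbtw ℝ x y z := by
  intro hw
  have hsub : segment ℝ x z ⊆ convexHull ℝ ((S : Set Pt) \ {y}) :=
    segment_subset_convexHull ⟨hx, hxy⟩ ⟨hz, hyz.symm⟩
  exact hS y hy (hsub hw.mem_segment)

lemma ConvexPos.genPos {S : Finset Pt} (hS : ConvexPos S) : GenPos S := by
  intro p hp q hq r hr hpq hpr hqr hcol
  rcases hcol.wbtw_or_wbtw_or_wbtw with hw | hw | hw
  · exact hS.not_wbtw hp hq hr hpq hqr hw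
  · exact hS.not_wbtw hq hr hp hqr hpr.symm hw
  · exact hS.not_wbtw hr hp hq hpr.symm hpq hw

lemma triInt_reverse (a b c : Pt) : triInt a b c = triInt c b a := by
  unfold triInt
  rw [Set.insert_comm a b, Set.pair_comm a c, Set.insert_comm b c]

lemma mem_convexHull_triple_of_orient_pos {a b c x : Pt} (hab : 0 < orient a b x)
    (hbc : 0 < orient b c x) (hca : 0 < orient c a x) :
    x ∈ convexHull ℝ ({a, b, c} : Set Pt) := by
  have hsum : orient a b c = orient b c x + orient c a x + orient a b x := by
    unfold orient; ring
  have hD : 0 < orient a b c := by linarith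
  -- Barycentric coordinates are ratios of areas.
  have hx : x = (orient b c x / orient a b c) • a + (orient c a x / orient a b c) • b +
      (orient a b x / orient a b c) • c := by
    ext <;>
    · simp only [Prod.fst_add, Prod.snd_add, Prod.smul_fst, Prod.smul_snd, smul_eq_mul]
      field_simp
      unfold orient
      ring
  rw [hx]
  have := (convex_convexHull ℝ ({a, b, c} : Set Pt)).sum_mem (t := Finset.univ)
    (w := ![orient b c x / orient a b c, orient c a x / orient a b c, orient a b x / orient a b c])
    (z := ![a, b, c])
    (by
      intro i _
      fin_cases i
      · exact (div_pos hbc hD).le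
      · exact (div_pos hca hD).le
      · exact (div_pos hab hD).le)
    (by simp [Fin.sum_univ_three, ← add_div, ← hsum, hD.ne'])
    (by intro i _; apply subset_convexHull; fin_cases i <;> simp)
  simpa [Fin.sum_univ_three] using this

lemma mem_triInt_of_orient_pos {a b c x : Pt} (hab : 0 < orient a b x) (hbc : 0 < orient b c x)
    (hca : 0 < orient c a x) : x ∈ triInt a b c := by
  have hcont (p q : Pt) : Continuous (orient p q) := by unfold orient; fun_prop
  refine mem_interior.2 ⟨{y | 0 < orient a b y ∧ 0 < orient b c y ∧ 0 < orient c a y},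
    fun y hy => mem_convexHull_triple_of_orient_pos hy.1 hy.2.1 hy.2.2, ?_, hab, hbc, hca⟩
  exact (isOpen_lt continuous_const (hcont a b)).inter
    ((isOpen_lt continuous_const (hcont b c)).inter (isOpen_lt continuous_const (hcont c a)))

lemma not_disjoint_segOf_triInt {v a b c : Pt} (hab : 0 < orient v a b) (hbc : 0 < orient v b c)
    (hac : 0 < orient v a c) : ¬ Disjoint (segOf s(v, b)) (triInt c v a) := by
  set D := orient v a c
  set s := orient v a b + orient v b c
  have : 0 < s := by positivity
  -- The ray from `v` through `b` crosses the line `ac` at parameter `D / s`, which exceeds `t`.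
  set t := D / (D + s) with ht
  have ht_pos : 0 < t := by positivity
  have ht_le : t ≤ 1 := (div_le_one (by positivity)).2 (by linarith)
  have hts : t * s < D := by
    rw [ht, div_mul_eq_mul_div, div_lt_iff₀ (by positivity)]
    nlinarith
  have hst : 1 - t + t = 1 := by ring
  set x : Pt := (1 - t) • v + t • b
  have hax : orient v a x = t * orient v a b := orient_combination_right hst v a b
  have hxc : orient v x c = t * orient v b c := orient_combination_middle hst v b c
  refine Set.not_disjoint_iff.2
    ⟨x, ⟨1 - t, t, by linarith, ht_pos.le, hst, rfl⟩, mem_triInt_of_orient_pos ?_ ?_ ?_⟩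
  · have : orient c v x = orient v x c := by unfold orient; ring
    rw [this, hxc]
    positivity
  · rw [hax]
    positivity
  · have : orient a c x = D - orient v a x - orient v x c := by simp only [D]; unfold orient; ring
    rw [this, hax, hxc]
    linarith

lemma not_disjoint_triInt_of_sign_orient_eq {v r p q : Pt} (hrp : orient v r p ≠ 0)
    (hpq : orient v p q ≠ 0)
    (hside : SignType.sign (orient v r p) = SignType.sign (orient v r q)) :
    ¬ Disjoint (segOf s(v, p)) (triInt q v r) ∨ ¬ Disjoint (segOf s(v, q)) (triInt p v r) := by
  have hswap := orient_swap v
  rcases hrp.lt_or_gt with hp | hp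
  · have hq : orient v r q < 0 := sign_eq_neg_one_iff.1 (hside ▸ sign_neg hp)
    rw [← neg_pos, ← hswap] at hp hq
    rw [triInt_reverse q, triInt_reverse p]
    rcases hpq.lt_or_gt with h | h
    · rw [← neg_pos, ← hswap] at h
      exact .inl (not_disjoint_segOf_triInt h hp hq)
    · exact .inr (not_disjoint_segOf_triInt h hq hp)
  · have hq : 0 < orient v r q := sign_eq_one_iff.1 (hside ▸ sign_pos hp)
    rcases hpq.lt_or_gt with h | h
    · rw [← neg_pos, ← hswap] at h
      exact .inr (not_disjoint_segOf_triInt hq h hp)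
    · exact .inl (not_disjoint_segOf_triInt hp h hq)

section Degree

variable {α : Type*} [DecidableEq α]

/-- The degree of the vertex `v` in the graph with edge set `E`. -/
def degreeIn (v : α) (E : Finset (Sym2 α)) : ℕ := (E.filter (v ∈ ·)).card

lemma degreeIn_mono (v : α) {E F : Finset (Sym2 α)} (h : E ⊆ F) : degreeIn v E ≤ degreeIn v F :=
  Finset.card_le_card (Finset.filter_subset_filter _ h)

lemma degreeIn_inter_add_degreeIn_sdiff (v : α) (E F : Finset (Sym2 α)) :
    degreeIn v (E ∩ F) + degreeIn v (E \ F) = degreeIn v E := by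
  unfold degreeIn
  rw [← Finset.card_union_of_disjoint
      (Finset.disjoint_filter_filter (Finset.disjoint_sdiff_inter E F).symm),
    ← Finset.filter_union, Finset.union_comm, Finset.sdiff_union_inter]

lemma degreeIn_le_degreeIn_add_card_leaving (v : α) {E F : Finset (Sym2 α)} {π : Sym2 α → Sym2 α}
    (hmaps : Set.MapsTo π ↑(E \ F) ↑(F \ E)) (hinj : Set.InjOn π ↑(E \ F)) :
    degreeIn v E ≤ degreeIn v F + ((E \ F).filter fun e => v ∈ e ∧ v ∉ π e).card := by
  have hstaying : ((E \ F).filter fun e => v ∈ e ∧ v ∈ π e).card ≤ degreeIn v (F \ E) := by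
    refine Finset.card_le_card_of_injOn π (fun e he => ?_)
      (hinj.mono (Finset.coe_subset.2 (Finset.filter_subset _ _)))
    obtain ⟨heE, -, hvπ⟩ := Finset.mem_filter.1 he
    exact Finset.mem_filter.2 ⟨hmaps heE, hvπ⟩
  have hsplit : ((E \ F).filter fun e => v ∈ e ∧ v ∈ π e).card +
      ((E \ F).filter fun e => v ∈ e ∧ v ∉ π e).card = degreeIn v (E \ F) := by
    simp only [← Finset.filter_filter]
    exact Finset.card_filter_add_card_filter_not _
  have hE := degreeIn_inter_add_degreeIn_sdiff v E F
  have hF := degreeIn_inter_add_degreeIn_sdiff v F E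
  rw [Finset.inter_comm] at hF
  omega

end Degree

/-- The points `p` of `S` for which `vp` is an edge of `E` that can be slid off `v` along `vr`:
no edge of `E` meets the interior of the triangle `pvr`. -/
def slideTips (S : Finset Pt) (E : Finset (Sym2 Pt)) (v r : Pt) : Finset Pt :=
  (S \ {v, r}).filter fun p => s(v, p) ∈ E ∧ ∀ g ∈ E, Disjoint (segOf g) (triInt p v r)

section Slides

variable {S : Finset Pt} {E F : Finset (Sym2 Pt)} {v : Pt}

lemma card_slideTips_le_two (hS : GenPos S) (E : Finset (Sym2 Pt)) {r : Pt} (hv : v ∈ S)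
    (hr : r ∈ S) (hvr : v ≠ r) : (slideTips S E v r).card ≤ 2 := by
  by_contra! hcard
  have hspec {p : Pt} (hp : p ∈ slideTips S E v r) :
      p ∈ S ∧ v ≠ p ∧ r ≠ p ∧ s(v, p) ∈ E ∧ ∀ g ∈ E, Disjoint (segOf g) (triInt p v r) := by
    simp only [slideTips, Finset.mem_filter, Finset.mem_sdiff, Finset.mem_insert,
      Finset.mem_singleton, not_or] at hp
    exact ⟨hp.1.1, Ne.symm hp.1.2.1, Ne.symm hp.1.2.2, hp.2⟩
  have horient {p : Pt} (hp : p ∈ slideTips S E v r) : orient v r p ≠ 0 :=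
    hS.orient_ne_zero hv hr (hspec hp).1 hvr (hspec hp).2.1 (hspec hp).2.2.1
  obtain ⟨p, hp, q, hq, hpq, hside⟩ := Finset.exists_ne_map_eq_of_card_lt_of_maps_to
    (t := {-1, 1}) (f := fun p => SignType.sign (orient v r p)) (by simpa using hcard)
    fun p hp => by rcases (horient hp).lt_or_gt with h | h <;> simp [h]
  obtain ⟨hpS, hvp, -, hpE, hpdisj⟩ := hspec hp
  obtain ⟨hqS, hvq, -, hqE, hqdisj⟩ := hspec hq
  rcases not_disjoint_triInt_of_sign_orient_eq (horient hp)
    (hS.orient_ne_zero hv hpS hqS hvp hvq hpq) hside with h | h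
  · exact h (hqdisj _ hpE)
  · exact h (hpdisj _ hqE)

lemma card_le_two_mul_degreeIn_of_slideTips (hS : GenPos S) {A G : Finset (Sym2 Pt)}
    (hA : ∀ e ∈ A, ∃ r, s(v, r) ∈ G ∧ ∃ p ∈ slideTips S E v r, s(v, p) = e)
    (hG : ∀ e ∈ G, ¬ e.IsDiag ∧ ∀ p ∈ e, p ∈ S) : A.card ≤ 2 * degreeIn v G := by
  set R := S.filter fun r => s(v, r) ∈ G
  have hRcard : R.card ≤ degreeIn v G := by
    refine Finset.card_le_card_of_injOn (fun r => s(v, r)) (fun r hr => ?_)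
      (fun a _ b _ h => Sym2.congr_right.1 h)
    exact Finset.mem_filter.2 ⟨(Finset.mem_filter.1 hr).2, Sym2.mem_mk_left v r⟩
  have hcover : A ⊆ (R.biUnion (slideTips S E v)).image fun p => s(v, p) := by
    intro e he
    obtain ⟨r, hrG, p, hp, rfl⟩ := hA e he
    have hrS : r ∈ S := (hG _ hrG).2 r (Sym2.mem_mk_right v r)
    exact Finset.mem_image_of_mem _
      (Finset.mem_biUnion.2 ⟨r, Finset.mem_filter.2 ⟨hrS, hrG⟩, hp⟩)
  calc A.card ≤ (R.biUnion (slideTips S E v)).card :=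
        (Finset.card_le_card hcover).trans Finset.card_image_le
    _ ≤ R.card * 2 := Finset.card_biUnion_le_card_mul _ _ _ fun r hr => by
        obtain ⟨hrS, hrG⟩ := Finset.mem_filter.1 hr
        obtain ⟨hdiag, hends⟩ := hG _ hrG
        exact card_slideTips_le_two hS E (hends v (Sym2.mem_mk_left v r)) hrS
          (by simpa using hdiag)
    _ ≤ 2 * degreeIn v G := by omega

lemma SimEdgeSlide.exists_slideTips (h : SimEdgeSlide S E F) :
    ∃ π : Sym2 Pt → Sym2 Pt, Set.MapsTo π ↑(E \ F) ↑(F \ E) ∧ Set.InjOn π ↑(E \ F) ∧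
      ∀ v, ∀ e ∈ E \ F, v ∈ e → v ∉ π e →
        ∃ r, s(v, r) ∈ E ∩ F ∧ ∃ p ∈ slideTips S E v r, s(v, p) = e := by
  obtain ⟨hE, hF, π, hπ, hslide⟩ := h
  refine ⟨π, hπ.mapsTo, hπ.injOn, fun v e he hve hvπ => ?_⟩
  obtain ⟨p, q, r, rfl, hπe, hqrE, hqrF, hempty⟩ := hslide e he
  have heE : s(p, q) ∈ E := (Finset.mem_sdiff.1 he).1
  have hprF : s(p, r) ∈ F := hπe ▸ (Finset.mem_sdiff.1 (hπ.mapsTo he)).1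
  rw [hπe, Sym2.mem_iff, not_or] at hvπ
  obtain rfl : v = q := (Sym2.mem_iff.1 hve).resolve_left hvπ.1
  have hpr : p ≠ r := by simpa using (hF.1 _ hprF).1
  have hpS : p ∈ S := (hE.1 _ heE).2 p (Sym2.mem_mk_left p v)
  refine ⟨r, Finset.mem_inter.2 ⟨hqrE, hqrF⟩, p, Finset.mem_filter.2 ⟨?_, ?_, ?_⟩, Sym2.eq_swap⟩
  · simp [hpS, hpr, Ne.symm hvπ.1]
  · rwa [Sym2.eq_swap]
  · exact fun g hg => hempty g (Finset.mem_union_left F hg)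

lemma SimEdgeSlide.degreeIn_le (hS : GenPos S) (h : SimEdgeSlide S E F) (v : Pt) :
    degreeIn v E ≤ 3 * degreeIn v F := by
  obtain ⟨π, hmaps, hinj, htips⟩ := h.exists_slideTips
  have hdrop := degreeIn_le_degreeIn_add_card_leaving v hmaps hinj
  have hleaving : ((E \ F).filter fun e => v ∈ e ∧ v ∉ π e).card ≤ 2 * degreeIn v (E ∩ F) :=
    card_le_two_mul_degreeIn_of_slideTips hS
      (fun e he => by
        obtain ⟨heEF, hve, hvπ⟩ := Finset.mem_filter.1 he
        exact htips v e heEF hve hvπ)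
      (fun e he => h.1.1 e (Finset.mem_of_mem_inter_left he))
  have hcommon : degreeIn v (E ∩ F) ≤ degreeIn v F := degreeIn_mono v Finset.inter_subset_right
  omega

lemma degreeIn_le_three_pow_mul (hS : GenPos S) {f : ℕ → Finset (Sym2 Pt)} {k : ℕ}
    (hf : ∀ i < k, SimEdgeSlide S (f i) (f (i + 1))) (v : Pt) :
    degreeIn v (f 0) ≤ 3 ^ k * degreeIn v (f k) := by
  induction k with
  | zero => simp
  | succ k ih =>
    calc degreeIn v (f 0) ≤ 3 ^ k * degreeIn v (f k) := ih fun i hi => hf i (by omega)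
      _ ≤ 3 ^ k * (3 * degreeIn v (f (k + 1))) := by
        gcongr
        exact (hf k (by omega)).degreeIn_le hS v
      _ = 3 ^ (k + 1) * degreeIn v (f (k + 1)) := by ring

end Slides

section Stars

variable {S : Finset Pt} {v w : Pt}

lemma mem_starAt {e : Sym2 Pt} : e ∈ starAt S v ↔ ∃ u ∈ S, u ≠ v ∧ s(v, u) = e := by
  simp only [starAt, Finset.mem_image, Finset.mem_erase, and_assoc, and_left_comm]

lemma noCrossPair_of_orient_ne_zero {u : Pt} (h : orient v u w ≠ 0) :
    NoCrossPair s(v, u) s(v, w) := by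
  rintro x ⟨⟨a, b, -, -, hab, rfl⟩, ⟨a', b', -, -, hab', hx⟩⟩
  have hzero : b * orient v u w = 0 := by
    rw [← orient_combination_middle hab, ← hx, orient_combination_middle hab', orient_self_right,
      mul_zero]
  obtain rfl : b = 0 := (mul_eq_zero.1 hzero).resolve_right h
  obtain rfl : a = 1 := by linarith
  simp [epts]

lemma noCross_starAt (hS : GenPos S) (hv : v ∈ S) : NoCross (starAt S v) := by
  intro e he e' he' hne
  obtain ⟨u, hu, huv, rfl⟩ := mem_starAt.1 he
  obtain ⟨w, hw, hwv, rfl⟩ := mem_starAt.1 he'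
  have huw : u ≠ w := by rintro rfl; exact hne rfl
  exact noCrossPair_of_orient_ne_zero (hS.orient_ne_zero hv hu hw huv.symm hwv.symm huw)

lemma card_starAt_add_one (hv : v ∈ S) : (starAt S v).card + 1 = S.card := by
  rw [starAt, Finset.card_image_of_injective _ fun _ _ h => Sym2.congr_right.1 h,
    Finset.card_erase_add_one hv]

lemma reflTransGen_starAt {p q : Pt} (hp : p ∈ S) (hq : q ∈ S) :
    Relation.ReflTransGen (fun a b => s(a, b) ∈ starAt S v) p q := by
  have hto : Relation.ReflTransGen (fun a b => s(a, b) ∈ starAt S v) p v := by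
    rcases eq_or_ne p v with rfl | hpv
    · exact .refl
    · exact .single (mem_starAt.2 ⟨p, hp, hpv, Sym2.eq_swap⟩)
  have hfrom : Relation.ReflTransGen (fun a b => s(a, b) ∈ starAt S v) v q := by
    rcases eq_or_ne q v with rfl | hqv
    · exact .refl
    · exact .single (mem_starAt.2 ⟨q, hq, hqv, rfl⟩)
  exact hto.trans hfrom

lemma isPST_starAt (hS : GenPos S) (hv : v ∈ S) : IsPST S (starAt S v) := by
  refine ⟨fun e he => ?_, noCross_starAt hS hv, card_starAt_add_one hv,
    fun p hp q hq => reflTransGen_starAt hp hq⟩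
  obtain ⟨u, hu, huv, rfl⟩ := mem_starAt.1 he
  simp [huv.symm, hv, hu]

lemma degreeIn_starAt_self_add_one (hv : v ∈ S) : degreeIn v (starAt S v) + 1 = S.card := by
  rw [degreeIn, Finset.filter_true_of_mem, card_starAt_add_one hv]
  intro e he
  obtain ⟨u, -, -, rfl⟩ := mem_starAt.1 he
  exact Sym2.mem_mk_left v u

lemma degreeIn_starAt_le_one (hvw : v ≠ w) : degreeIn v (starAt S w) ≤ 1 := by
  refine Finset.card_le_one_iff_subset_singleton.2 ⟨s(w, v), fun e he => ?_⟩
  obtain ⟨heStar, hve⟩ := Finset.mem_filter.1 he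
  obtain ⟨u, -, -, rfl⟩ := mem_starAt.1 heStar
  obtain rfl : v = u := (Sym2.mem_iff.1 hve).resolve_left hvw
  exact Finset.mem_singleton_self _

lemma card_le_four_pow_of_slides_starAt (hS : GenPos S) (hcard : 3 ≤ S.card) (hv : v ∈ S)
    (hvw : v ≠ w) {f : ℕ → Finset (Sym2 Pt)} {k : ℕ} (hzero : f 0 = starAt S v)
    (hlast : f k = starAt S w) (hf : ∀ i < k, SimEdgeSlide S (f i) (f (i + 1))) :
    S.card ≤ 4 ^ k := by
  have hle : S.card ≤ 3 ^ k + 1 := by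
    rw [← degreeIn_starAt_self_add_one hv, ← hzero]
    gcongr
    calc degreeIn v (f 0) ≤ 3 ^ k * degreeIn v (f k) := degreeIn_le_three_pow_mul hS hf v
      _ ≤ 3 ^ k * 1 := by
        gcongr
        exact hlast ▸ degreeIn_starAt_le_one hvw
      _ = 3 ^ k := mul_one _
  have hk : k ≠ 0 := by rintro rfl; omega
  calc S.card ≤ 3 ^ k + 1 ^ k := by rwa [one_pow]
    _ ≤ (3 + 1) ^ k := pow_add_pow_le (by norm_num) (by norm_num) hk

end Stars

theorem stmt_11_general :
    ∃ c : ℝ, 0 < c ∧ ∀ n : ℕ, 3 ≤ n → ∀ S : Finset Pt, S.card = n → GenPos S →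
      ∃ E₁ E₂ : Finset (Sym2 Pt), IsPST S E₁ ∧ IsPST S E₂ ∧
        ∀ (k : ℕ) (f : ℕ → Finset (Sym2 Pt)), f 0 = E₁ → f k = E₂ →
          (∀ i < k, SimEdgeSlide S (f i) (f (i + 1))) → c * Real.log n ≤ (k : ℝ) := by
  have hlog : 0 < Real.log 4 := Real.log_pos (by norm_num)
  refine ⟨(Real.log 4)⁻¹, inv_pos.2 hlog, ?_⟩
  rintro n hn S rfl hS
  obtain ⟨v, hv, w, hw, hvw⟩ := Finset.one_lt_card.1 (by omega : 1 < S.card)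
  refine ⟨starAt S v, starAt S w, isPST_starAt hS hv, isPST_starAt hS hw, ?_⟩
  intro k f hzero hlast hf
  have hcard : (S.card : ℝ) ≤ 4 ^ k :=
    mod_cast card_le_four_pow_of_slides_starAt hS hn hv hvw hzero hlast hf
  rw [inv_mul_le_iff₀ hlog, mul_comm, ← Real.log_pow]
  exact Real.log_le_log (by norm_cast; omega) hcard

/-- on every set of `n ≥ 3` points in convex position there are two trees at
simultaneous edge slide distance `Ω(log n)`. -/
theorem stmt_11 :
    ∃ c : ℝ, 0 < c ∧ ∀ n : ℕ, 3 ≤ n → ∀ S : Finset Pt, S.card = n → ConvexPos S →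
      ∃ E₁ E₂ : Finset (Sym2 Pt), IsPST S E₁ ∧ IsPST S E₂ ∧
        ∀ (k : ℕ) (f : ℕ → Finset (Sym2 Pt)), f 0 = E₁ → f k = E₂ →
          (∀ i < k, SimEdgeSlide S (f i) (f (i + 1))) → c * Real.log n ≤ (k : ℝ) := by
  obtain ⟨c, hc, h⟩ := stmt_11_general
  exact ⟨c, hc, fun n hn S hcard hS => h n hn S hcard hS.genPos⟩
end
end
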